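/- (Receive fast-forward.) Let 𝒩 be one of the concrete network architectures p2p or bag. If the finite word v · u₁ · (p▷q?a) · u₂ is 𝒩-channel-compliant, no event of u₁ has q as its active participant, and v · (p▷q?a) is 𝒩-channel-compliant, then v · (p▷q?a) · u₁ · u₂ is 𝒩-channel-compliant. -/

import Mathlib

/-!
The receive `r = p▷q?a` commutes with every event `e` in which `q` is not active: when both are
enabled in a channel state, each remains enabled after the other, and both orders lead to the same
state (`CommutesWith`). For p2p, `e` either uses another channel, or is a send on `(p,q)`, and
appending at the tail does not interfere with removing the head (`p2p_commutes`). For bag, `e`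
either adds a message or deletes one with a different receiver (`bag_commutes`). Pushing `r`
leftwards through `u₁` (`NetArch.runFrom_commute`) shows that `r · u₁` and `u₁ · r` reach the same
state after `w`, so the continuation `u₂` is executable after either.
-/

/-- Asynchronous events: send events `p▷q!v` and receive events `p▷q?v`. -/
inductive Event (P V : Type) where
  | send (p q : P) (v : V)
  | recv (p q : P) (v : V)
deriving DecidableEq

/-- The active participant of an event: the sender of a send, the receiver of a receive. -/
def Event.active {P V : Type} : Event P V → P
  | .send p _ _ => p
  | .recv _ q _ => q

/-- A network architecture: channels `C`, buffer contents `B`, a channel map,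
partial insert/remove operations, and an empty buffer. -/
structure NetArch (P V C B : Type) where
  chan : P → P → C
  insert : P × P × V → B → Option B
  remove : P × P × V → B → Option B
  b0 : B

variable {P V C B : Type}

/-- Executing a single event on a channel state. -/
def NetArch.step [DecidableEq C] (N : NetArch P V C B) :
    Event P V → (C → B) → Option (C → B)
  | .send p q v, ξ => (N.insert (p, q, v) (ξ (N.chan p q))).map (Function.update ξ (N.chan p q))
  | .recv p q v, ξ => (N.remove (p, q, v) (ξ (N.chan p q))).map (Function.update ξ (N.chan p q))

/-- Executing a finite word of events from a channel state. -/
def NetArch.runFrom [DecidableEq C] (N : NetArch P V C B) :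
    List (Event P V) → (C → B) → Option (C → B)
  | [], ξ => some ξ
  | e :: w, ξ => (N.step e ξ).bind (N.runFrom w)

/-- The initial channel state: every channel holds the empty buffer. -/
def NetArch.init (N : NetArch P V C B) : C → B := fun _ => N.b0

/-- A finite word is channel-compliant if executing it from the initial channel
state is defined at every step. -/
def NetArch.compliant [DecidableEq C] (N : NetArch P V C B) (w : List (Event P V)) : Prop :=
  (N.runFrom w N.init).isSome

/-- A finite word is channel-matched if it is channel-compliant and reaches the
initial (all-empty) channel state. -/
def NetArch.matched [DecidableEq C] (N : NetArch P V C B) (w : List (Event P V)) : Prop :=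
  N.runFrom w N.init = some N.init

/-- Projection of a word onto the events in which participant `r` is active. -/
def proj [DecidableEq P] (r : P) (w : List (Event P V)) : List (Event P V) :=
  w.filter (fun e => decide (e.active = r))

/-- Equality under local projection. -/
def equivP [DecidableEq P] (w₁ w₂ : List (Event P V)) : Prop :=
  ∀ r : P, proj r w₁ = proj r w₂

/-- `split` replaces every synchronous message exchange `(p,q,v)` by the two
consecutive asynchronous events `p▷q!v · p▷q?v`. -/
def split : List (P × P × V) → List (Event P V)
  | [] => []
  | m :: ρ => Event.send m.1 m.2.1 m.2.2 :: Event.recv m.1 m.2.1 m.2.2 :: split ρ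

/-- FIFO insertion: append at the tail (always defined). -/
def fifoInsert {M : Type} (m : M) (b : List M) : Option (List M) := some (b ++ [m])

/-- FIFO removal: defined iff the buffer has head `m`, removing the head. -/
def fifoRemove {M : Type} [DecidableEq M] (m : M) : List M → Option (List M)
  | [] => none
  | m' :: b => if m' = m then some b else none

/-- Multiset insertion: add one occurrence (always defined). -/
def bagInsert {M : Type} (m : M) (b : Multiset M) : Option (Multiset M) := some (m ::ₘ b)

/-- Multiset removal: defined iff `m ∈ b`, deleting one occurrence. -/
def bagRemove {M : Type} [DecidableEq M] (m : M) (b : Multiset M) : Option (Multiset M) :=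
  if m ∈ b then some (b.erase m) else none

/-- Peer-to-peer FIFO architecture: one FIFO channel per sender-receiver pair. -/
def p2p (P V : Type) [DecidableEq P] [DecidableEq V] :
    NetArch P V (P × P) (List (P × P × V)) :=
  ⟨fun p q => (p, q), fifoInsert, fifoRemove, []⟩

/-- Senderbox FIFO architecture: one FIFO channel per sender. -/
def sb (P V : Type) [DecidableEq P] [DecidableEq V] :
    NetArch P V P (List (P × P × V)) :=
  ⟨fun p _ => p, fifoInsert, fifoRemove, []⟩

/-- Mailbox FIFO architecture: one FIFO channel per receiver. -/
def mb (P V : Type) [DecidableEq P] [DecidableEq V] :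
    NetArch P V P (List (P × P × V)) :=
  ⟨fun _ q => q, fifoInsert, fifoRemove, []⟩

/-- Monobox FIFO architecture: a single FIFO channel shared by all pairs. -/
def monob (P V : Type) [DecidableEq P] [DecidableEq V] :
    NetArch P V Unit (List (P × P × V)) :=
  ⟨fun _ _ => (), fifoInsert, fifoRemove, []⟩

/-- Bag architecture: a single channel holding a multiset of messages. -/
def bag (P V : Type) [DecidableEq P] [DecidableEq V] :
    NetArch P V Unit (Multiset (P × P × V)) :=
  ⟨fun _ _ => (), bagInsert, bagRemove, 0⟩

/-- Local diamond property: in every channel state where both `r` and `e` are enabled, they can be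
executed in either order, with the same resulting state. -/
def NetArch.CommutesWith {P V C B : Type} [DecidableEq C] (N : NetArch P V C B)
    (r e : Event P V) : Prop :=
  ∀ ξ ξr ξe, N.step r ξ = some ξr → N.step e ξ = some ξe →
    ∃ ζ, N.step e ξr = some ζ ∧ N.step r ξe = some ζ

theorem NetArch.runFrom_append {P V C B : Type} [DecidableEq C] (N : NetArch P V C B)
    (w₁ w₂ : List (Event P V)) (ξ : C → B) :
    N.runFrom (w₁ ++ w₂) ξ = (N.runFrom w₁ ξ).bind (N.runFrom w₂) := by
  induction w₁ generalizing ξ with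
  | nil => rfl
  | cons e w₁ ih =>
    simp only [List.cons_append, NetArch.runFrom]
    cases N.step e ξ with
    | none => rfl
    | some η => exact ih η

/-- The diamond property extends from single events to words. -/
theorem NetArch.runFrom_commute {P V C B : Type} [DecidableEq C] (N : NetArch P V C B)
    (r : Event P V) (u : List (Event P V)) (hu : ∀ e ∈ u, N.CommutesWith r e)
    (ξ ξr ξu : C → B) (hr : N.step r ξ = some ξr) (hξu : N.runFrom u ξ = some ξu) :
    ∃ ζ, N.runFrom u ξr = some ζ ∧ N.step r ξu = some ζ := by
  induction u generalizing ξ ξr with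
  | nil =>
    obtain rfl : ξ = ξu := by simpa [NetArch.runFrom] using hξu
    exact ⟨ξr, rfl, hr⟩
  | cons e u ih =>
    simp only [NetArch.runFrom, Option.bind_eq_some_iff] at hξu
    obtain ⟨η, he, hη⟩ := hξu
    obtain ⟨ζ, h₁, h₂⟩ := hu e (by simp) ξ ξr η hr he
    obtain ⟨ζ', h₃, h₄⟩ := ih (fun e' he' => hu e' (by simp [he'])) η ζ h₂ hη
    exact ⟨ζ', by simp [NetArch.runFrom, h₁, h₃], h₄⟩

theorem NetArch.compliant_fastforward {P V C B : Type} [DecidableEq C] (N : NetArch P V C B)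
    (r : Event P V) (w u₁ u₂ : List (Event P V)) (hu : ∀ e ∈ u₁, N.CommutesWith r e)
    (h : N.compliant (w ++ u₁ ++ r :: u₂)) (hr : N.compliant (w ++ [r])) :
    N.compliant (w ++ r :: (u₁ ++ u₂)) := by
  simp only [NetArch.compliant, Option.isSome_iff_exists, NetArch.runFrom_append,
    NetArch.runFrom, Option.bind_eq_some_iff] at h hr ⊢
  obtain ⟨θ, ξu, ⟨ξ, hw, hξu⟩, η, hη, hθ⟩ := h
  obtain ⟨ξr, ξ', hw', ξr', hr, -⟩ := hr
  obtain rfl : ξ = ξ' := Option.some.inj (hw.symm.trans hw')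
  obtain ⟨ζ, h₁, h₂⟩ := N.runFrom_commute r u₁ hu ξ ξr' ξu hr hξu
  obtain rfl : η = ζ := Option.some.inj (hη.symm.trans h₂)
  exact ⟨θ, ξ, hw, ξr', hr, η, h₁, hθ⟩

theorem fifoRemove_eq_some {M : Type} [DecidableEq M] (m : M) (b b' : List M) :
    fifoRemove m b = some b' ↔ b = m :: b' := by
  cases b with
  | nil => simp [fifoRemove]
  | cons x b => simp [fifoRemove]

theorem bagRemove_eq_some {M : Type} [DecidableEq M] (m : M) (b b' : Multiset M) :
    bagRemove m b = some b' ↔ b = m ::ₘ b' := by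
  constructor
  · intro h
    by_cases hm : m ∈ b
    · obtain rfl : b.erase m = b' := by simpa [bagRemove, hm] using h
      exact (Multiset.cons_erase hm).symm
    · simp [bagRemove, hm] at h
  · rintro rfl
    simp [bagRemove]

theorem p2p_commutes {P V : Type} [DecidableEq P] [DecidableEq V] (p q : P) (a : V)
    (e : Event P V) (he : e.active ≠ q) : (p2p P V).CommutesWith (.recv p q a) e := by
  intro ξ ξr ξe hr hs
  simp only [NetArch.step, p2p, Option.map_eq_some_iff, fifoRemove_eq_some] at hr
  obtain ⟨b, hb, rfl⟩ := hr
  cases e with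
  | send x y v =>
    simp only [NetArch.step, p2p, fifoInsert, Option.map_some, Option.some.injEq] at hs
    subst hs
    by_cases hc : (x, y) = (p, q)
    · obtain ⟨rfl, rfl⟩ := Prod.mk.inj hc
      exact ⟨_, rfl, by simp [NetArch.step, p2p, hb, fifoRemove]⟩
    · exact ⟨_, rfl, by
        simp [NetArch.step, p2p, Function.update_of_ne (Ne.symm hc), Function.update_of_ne hc,
          hb, fifoRemove, Function.update_comm hc]⟩
  | recv x y v =>
    -- the two receives have different receivers, hence use different channels
    have hc : (x, y) ≠ (p, q) := fun h => he (Prod.mk.inj h).2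
    simp only [NetArch.step, p2p, Option.map_eq_some_iff, fifoRemove_eq_some] at hs
    obtain ⟨b', hb', rfl⟩ := hs
    refine ⟨Function.update (Function.update ξ (p, q) b) (x, y) b', ?_, ?_⟩
    · simp [NetArch.step, p2p, Function.update_of_ne hc, hb', fifoRemove]
    · simp [NetArch.step, p2p, Function.update_of_ne (Ne.symm hc), hb, fifoRemove,
        Function.update_comm hc]

theorem bag_commutes {P V : Type} [DecidableEq P] [DecidableEq V] (p q : P) (a : V)
    (e : Event P V) (he : e.active ≠ q) : (bag P V).CommutesWith (.recv p q a) e := by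
  intro ξ ξr ξe hr hs
  simp only [NetArch.step, bag, Option.map_eq_some_iff, bagRemove_eq_some] at hr
  obtain ⟨b, hb, rfl⟩ := hr
  cases e with
  | send x y v =>
    simp only [NetArch.step, bag, bagInsert, Option.map_some, Option.some.injEq] at hs
    subst hs
    refine ⟨_, rfl, ?_⟩
    simp only [NetArch.step, bag, Option.map_eq_some_iff, bagRemove_eq_some]
    exact ⟨(x, y, v) ::ₘ b, by simp [hb, Multiset.cons_swap], by simp⟩
  | recv x y v =>
    have hm : (p, q, a) ≠ (x, y, v) := fun h => he (by simp_all [Event.active])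
    simp only [NetArch.step, bag, Option.map_eq_some_iff, bagRemove_eq_some] at hs
    obtain ⟨b', hb', rfl⟩ := hs
    -- the two messages differ, so the multiset contains both of them over a common remainder `c`
    obtain ⟨c, rfl, rfl⟩ : ∃ c, b = (x, y, v) ::ₘ c ∧ b' = (p, q, a) ::ₘ c := by
      rcases Multiset.cons_eq_cons.1 (hb.symm.trans hb') with ⟨h, -⟩ | ⟨-, c, h₁, h₂⟩
      · exact absurd h hm
      · exact ⟨c, h₁, h₂⟩
    refine ⟨fun _ => c, ?_, ?_⟩ <;>
      simp only [NetArch.step, bag, Option.map_eq_some_iff, bagRemove_eq_some] <;>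
      exact ⟨c, by simp, by ext; simp⟩

/-- Receive fast-forward: for the p2p and bag architectures, a receive event
`p▷q?a` can be moved ahead of any block `u₁` containing no event in which `q`
is active, provided the receive is already enabled after the preceding word. -/
theorem receive_fastforward {P V : Type} [DecidableEq P] [DecidableEq V]
    (w u₁ u₂ : List (Event P V)) (p q : P) (hpq : p ≠ q) (a : V)
    (hu₁ : ∀ e ∈ u₁, e.active ≠ q) :
    ((p2p P V).compliant (w ++ u₁ ++ Event.recv p q a :: u₂) →
      (p2p P V).compliant (w ++ [Event.recv p q a]) →
      (p2p P V).compliant (w ++ Event.recv p q a :: (u₁ ++ u₂))) ∧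
    ((bag P V).compliant (w ++ u₁ ++ Event.recv p q a :: u₂) →
      (bag P V).compliant (w ++ [Event.recv p q a]) →
      (bag P V).compliant (w ++ Event.recv p q a :: (u₁ ++ u₂))) := by
  exact ⟨NetArch.compliant_fastforward _ _ w u₁ u₂ fun e he => p2p_commutes p q a e (hu₁ e he),
    NetArch.compliant_fastforward _ _ w u₁ u₂ fun e he => bag_commutes p q a e (hu₁ e he)⟩
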